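/- arXiv:2602.02698 — 7 statements merged into one kernel-verified Lean document; each statement's English description precedes it below -/
import Mathlib

section
/- Let N be a natural number, let S be a subset of the set of binary strings of length N, and let S̄ = {0,1}^N \ S be its complement within {0,1}^N. Then for every cut n with 0 ≤ n ≤ N, the Schmidt ranks of S and S̄ across the cut n differ by at most one: rank(Ψ_n(S̄)) ≤ rank(Ψ_n(S)) + 1 and rank(Ψ_n(S)) ≤ rank(Ψ_n(S̄)) + 1. -/
/-!
Every string lies in exactly one of `S` and `Sᶜ`, so `Psi S + Psi Sᶜ` is the all-ones matrix,
the outer product of two all-ones vectors, which has rank at most one. Each of the two matrices is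
therefore this outer product plus the negative of the other, and the bound follows from
subadditivity of the rank together with its invariance under negation.
-/

open Classical

/-- The reshaped amplitude matrix of a set `S` of binary strings of length `N`
across the cut `n`: the `(u,v)` entry is `1` if the concatenation `u·v` lies in `S`
and `0` otherwise. -/
noncomputable def Psi (N n : ℕ) (hn : n ≤ N) (S : Set (Fin N → Fin 2)) :
    Matrix (Fin n → Fin 2) (Fin (N - n) → Fin 2) ℂ :=
  Matrix.of fun u v =>
    if (Fin.append u v ∘ Fin.cast (by omega : N = n + (N - n))) ∈ S then (1 : ℂ) else 0

/-- If `A + B` is the all-ones matrix, then `A` is a rank-one update of `-B`. -/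
theorem rank_le_of_add_eq_ones {m k : Type*} [Fintype m] [Fintype k] (A B : Matrix m k ℂ)
    (h : ∀ i j, A i j + B i j = 1) : A.rank ≤ B.rank + 1 := by
  have hA : A.mulVecLin =
      (Matrix.vecMulVec (fun _ : m => (1 : ℂ)) (fun _ : k => (1 : ℂ))).mulVecLin
        + (-B.mulVecLin) := by
    have hM : A + B = Matrix.vecMulVec (fun _ : m => (1 : ℂ)) (fun _ : k => (1 : ℂ)) := by
      ext i j
      simp [Matrix.vecMulVec_apply, h]
    rw [← hM, Matrix.mulVecLin_add]
    abel
  have h1 := Matrix.rank_vecMulVec_le (fun _ : m => (1 : ℂ)) (fun _ : k => (1 : ℂ))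
  unfold Matrix.rank at h1 ⊢
  rw [hA]
  have h2 := Submodule.finrank_mono (LinearMap.range_add_le
    (Matrix.vecMulVec (fun _ : m => (1 : ℂ)) (fun _ : k => (1 : ℂ))).mulVecLin (-B.mulVecLin))
  have h3 := Submodule.finrank_add_le_finrank_add_finrank
    (LinearMap.range (Matrix.vecMulVec (fun _ : m => (1 : ℂ)) (fun _ : k => (1 : ℂ))).mulVecLin)
    (LinearMap.range (-B.mulVecLin))
  rw [LinearMap.range_neg] at h2 h3
  omega

theorem Psi_add_compl (N n : ℕ) (hn : n ≤ N) (S : Set (Fin N → Fin 2))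
    (u : Fin n → Fin 2) (v : Fin (N - n) → Fin 2) :
    Psi N n hn S u v + Psi N n hn Sᶜ u v = 1 := by
  simp only [Psi, Matrix.of_apply, Set.mem_compl_iff]
  split_ifs <;> simp_all

/-- The Schmidt ranks of `S` and its complement within `{0,1}^N` differ by at most one
across every cut. -/
theorem complement_schmidt_rank_diff_le_one (N : ℕ) (S : Set (Fin N → Fin 2))
    (n : ℕ) (hn : n ≤ N) :
    (Psi N n hn Sᶜ).rank ≤ (Psi N n hn S).rank + 1 ∧
    (Psi N n hn S).rank ≤ (Psi N n hn Sᶜ).rank + 1 := by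
  refine ⟨rank_le_of_add_eq_ones _ _ fun u v => ?_, rank_le_of_add_eq_ones _ _ fun u v => ?_⟩
  · rw [add_comm, Psi_add_compl]
  · exact Psi_add_compl N n hn S u v
end

section
/- Let M be a deterministic finite automaton over a finite alphabet α with finite state type σ, accepting the language L = M.accepts. Then for every N ∈ ℕ and every cut n with 0 ≤ n ≤ N, the rank over ℂ of the matrix Ψ_n with rows indexed by words u of length n and columns indexed by words v of length N−n, whose (u,v) entry is 1 if the concatenation u·v ∈ L and 0 otherwise, is at most the cardinality of σ. -/
/-! The state reached after the prefix `u` determines which suffixes `v` complete it to an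
accepted word, so `PsiDFA` factors as a product of matrices through the index type `σ`, and its
rank is at most `Fintype.card σ`. -/

open Classical

/-- The reshaped amplitude matrix of the language accepted by the DFA `M`, for words of
length `N` across the cut `n`: the `(u,v)` entry is `1` if the concatenation `u·v` is
accepted by `M` and `0` otherwise. -/
noncomputable def PsiDFA {α σ : Type*} (M : DFA α σ) (n m : ℕ) :
    Matrix (Fin n → α) (Fin m → α) ℂ :=
  Matrix.of fun u v => if (List.ofFn u ++ List.ofFn v) ∈ M.accepts then (1 : ℂ) else 0

/-- The Schmidt rank of a regular language state across any cut is at most the number of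
states of a DFA accepting the language. -/
theorem rank_PsiDFA_le_card_states {α σ : Type*} [Fintype α] [Fintype σ]
    (M : DFA α σ) (N n : ℕ) (hn : n ≤ N) :
    (PsiDFA M n (N - n)).rank ≤ Fintype.card σ := by
  -- `A u q = 1` iff reading `u` leads to state `q`; `B q v = 1` iff `v` is accepted from `q`.
  let A : Matrix (Fin n → α) σ ℂ :=
    Matrix.of fun u q => if M.evalFrom M.start (List.ofFn u) = q then 1 else 0
  let B : Matrix σ (Fin (N - n) → α) ℂ :=
    Matrix.of fun q v => if M.evalFrom q (List.ofFn v) ∈ M.accept then 1 else 0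
  have factor : PsiDFA M n (N - n) = A * B := by
    ext u v
    simp only [PsiDFA, A, B, Matrix.mul_apply, Matrix.of_apply, DFA.mem_accepts, DFA.eval,
      DFA.evalFrom_of_append, ite_mul, one_mul, zero_mul, Finset.sum_ite_eq, Finset.mem_univ,
      if_true]
  rw [factor]
  exact (Matrix.rank_mul_le_left A B).trans A.rank_le_card_width
end

section
/- Let N, k, n be natural numbers with n ≤ N, and let S_k ⊆ {0,1}^N be the set of binary strings of length N with Hamming weight exactly k. Then the Schmidt rank of S_k across the cut n satisfies rank(Ψ_n(S_k)) ≤ k + 1. -/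
/-!
The entry of `Psi` at `(u, v)` depends only on the Hamming weights of `u` and `v`: it is `1` iff
`|u| + |v| = k` (`weight_append`). Splitting according to the value `j = |u| ∈ {0, …, k}` factors
the matrix through a space of dimension `k + 1`, as the product of the indicator matrix of
`|u| = j` and the indicator matrix of `j + |v| = k`.
-/

open Classical

/-- The set of binary strings of length `N` with Hamming weight exactly `k`. -/
def hammingSet (N k : ℕ) : Set (Fin N → Fin 2) :=
  {x | (Finset.univ.filter fun i => x i = 1).card = k}

/-- The Hamming weight of a binary string. -/
noncomputable def weight {m : ℕ} (x : Fin m → Fin 2) : ℕ :=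
  (Finset.univ.filter fun i => x i = 1).card

lemma weight_append {N n m : ℕ} (h : N = n + m) (u : Fin n → Fin 2) (v : Fin m → Fin 2) :
    weight (Fin.append u v ∘ Fin.cast h) = weight u + weight v := by
  subst h
  simp only [weight, Finset.card_filter, Fin.sum_univ_add, Function.comp_apply, Fin.cast_eq_self,
    Fin.append_left, Fin.append_right]

/-- The Schmidt rank of the Dicke-`k` (fixed Hamming weight `k`) state across any cut `n`
is at most `k + 1`. -/
theorem rank_Psi_hammingSet_le (N k n : ℕ) (hn : n ≤ N) :
    (Psi N n hn (hammingSet N k)).rank ≤ k + 1 := by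
  let A : Matrix (Fin n → Fin 2) (Fin (k + 1)) ℂ :=
    Matrix.of fun u j => if weight u = j then 1 else 0
  let B : Matrix (Fin (k + 1)) (Fin (N - n) → Fin 2) ℂ :=
    Matrix.of fun j v => if (j : ℕ) + weight v = k then 1 else 0
  have hAB : Psi N n hn (hammingSet N k) = A * B := by
    ext u v
    have hmem : (Fin.append u v ∘ Fin.cast (by omega : N = n + (N - n))) ∈ hammingSet N k ↔
        weight u + weight v = k := by
      rw [← weight_append (by omega : N = n + (N - n)) u v]
      rfl
    simp only [Psi, Matrix.of_apply, hmem, Matrix.mul_apply, A, B]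
    by_cases hu : weight u < k + 1
    · rw [Finset.sum_eq_single (⟨weight u, hu⟩ : Fin (k + 1))]
      · simp
      · intro j _ hj
        have : weight u ≠ j := fun h => hj (Fin.ext h.symm)
        simp [this]
      · simp
    · -- Here `|u| > k`, so row `u` vanishes on both sides.
      rw [if_neg (by omega), Finset.sum_eq_zero]
      intro j _
      have : weight u ≠ j := by omega
      simp [this]
  rw [hAB]
  calc (A * B).rank ≤ A.rank := Matrix.rank_mul_le_left A B
    _ ≤ k + 1 := by simpa using A.rank_le_card_width
end

section
/- Let N, k, n be natural numbers with k ≤ n and k ≤ N − n, and let S_k ⊆ {0,1}^N be the set of binary strings of length N with Hamming weight exactly k. Then the Schmidt rank of S_k across the cut n is exactly k + 1: rank(Ψ_n(S_k)) = k + 1. -/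
/-!
The entry of `Psi` at `(u, v)` depends only on the weights of `u` and `v`: it is `1` exactly when
`wt u + wt v = k` (`Psi_hammingSet_apply`). Splitting according to the weight `j ∈ {0, …, k}` of
`u` factors the matrix through a space of dimension `k + 1`, so the rank is at most `k + 1`.
Conversely, `k ≤ n` and `k ≤ N - n` allow a choice of rows of weights `0, …, k` and columns of
weights `k, …, 0`; the corresponding submatrix is the identity of size `k + 1`.
-/

open Classical

/-- The Hamming weight of a binary string. -/
def wt {m : ℕ} (u : Fin m → Fin 2) : ℕ := (Finset.univ.filter fun i => u i = 1).card

/-- The string `1…10…0` of length `m` whose first `a` letters are `1`. -/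
def stepString (m a : ℕ) : Fin m → Fin 2 := fun i => if (i : ℕ) < a then 1 else 0

lemma wt_stepString {m a : ℕ} (h : a ≤ m) : wt (stepString m a) = a := by
  have : (Finset.univ.filter fun i : Fin m => stepString m a i = 1)
      = Finset.univ.filter fun i : Fin m => (i : ℕ) < a := by
    ext i
    simp [stepString]
  rw [wt, this, Fin.card_filter_val_lt, min_eq_right h]

lemma wt_append {m l : ℕ} (u : Fin m → Fin 2) (v : Fin l → Fin 2) :
    wt (Fin.append u v) = wt u + wt v := by
  simp only [wt, Finset.card_filter, Fin.sum_univ_add, Fin.append_left, Fin.append_right]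

lemma wt_comp_cast {m l : ℕ} (h : m = l) (u : Fin l → Fin 2) :
    wt (u ∘ Fin.cast h) = wt u := by
  subst h
  rfl

lemma Psi_hammingSet_apply (N k n : ℕ) (hn : n ≤ N) (u : Fin n → Fin 2)
    (v : Fin (N - n) → Fin 2) :
    Psi N n hn (hammingSet N k) u v = if wt u + wt v = k then 1 else 0 := by
  have h : (Fin.append u v ∘ Fin.cast (by omega : N = n + (N - n))) ∈ hammingSet N k
      ↔ wt u + wt v = k := by
    rw [← wt_append, ← wt_comp_cast (by omega : N = n + (N - n)) (Fin.append u v)]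
    simp only [hammingSet, wt, Set.mem_ofPred_eq]
  simp only [Psi, Matrix.of_apply, h]

/-- For `k ≤ n` and `k ≤ N - n`, the Schmidt rank of the Dicke-`k` state across the cut `n`
is exactly `k + 1`. -/
theorem rank_Psi_hammingSet_eq (N k n : ℕ) (hn : n ≤ N) (hkn : k ≤ n) (hkm : k ≤ N - n) :
    (Psi N n hn (hammingSet N k)).rank = k + 1 := by
  apply le_antisymm
  · have h : Psi N n hn (hammingSet N k) =
        (Matrix.of fun u (j : Fin (k + 1)) => if wt u = j then (1 : ℂ) else 0) *
        (Matrix.of fun (j : Fin (k + 1)) v => if (j : ℕ) + wt v = k then (1 : ℂ) else 0) := by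
      ext u v
      rw [Psi_hammingSet_apply, Matrix.mul_apply]
      simp only [Matrix.of_apply, ite_mul, one_mul, zero_mul]
      by_cases hu : wt u < k + 1
      · rw [Finset.sum_eq_single (⟨wt u, hu⟩ : Fin (k + 1))]
        · simp
        · intro j _ hj
          exact if_neg fun e => hj (Fin.ext e.symm)
        · simp
      · rw [if_neg (by omega), Finset.sum_eq_zero]
        intro j _
        exact if_neg (by omega)
    rw [h]
    exact (Matrix.rank_mul_le_left _ _).trans 
      ((Matrix.rank_le_card_width _).trans_eq (Fintype.card_fin _))
  · have h : (Psi N n hn (hammingSet N k)).submatrix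
        (fun a : Fin (k + 1) => stepString n a)
        (fun b : Fin (k + 1) => stepString (N - n) (k - b)) = 1 := by
      ext a b
      rw [Matrix.submatrix_apply, Psi_hammingSet_apply, wt_stepString (by omega),
        wt_stepString (by omega), Matrix.one_apply]
      congr 1
      rw [Fin.ext_iff, eq_iff_iff]
      omega
    have h' := Matrix.rank_submatrix_le (Psi N n hn (hammingSet N k))
        (fun a : Fin (k + 1) => stepString n a)
        (fun b : Fin (k + 1) => stepString (N - n) (k - b))
    rw [h, Matrix.rank_one, Fintype.card_fin] at h'
    exact h'
end

section
/- Let N, k, n be natural numbers with n ≤ N, let S_k ⊆ {0,1}^N be the set of binary strings of length N with Hamming weight exactly k, and let S̄_k = {0,1}^N \ S_k be its complement within {0,1}^N. Then the Schmidt rank of S̄_k across the cut n satisfies rank(Ψ_n(S̄_k)) ≤ k + 2. -/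
/-!
The Hamming weight is additive under concatenation, so the `(u, v)` entry of the matrix depends
on `u` only through its weight `w u`: it vanishes iff `w u + w v = k`. All rows with `w u > k` are
identically one, so the row depends only on `min (w u) (k + 1)`, which takes at most `k + 2` values.
Hence the matrix factors through a space of dimension `k + 2`.
-/

open Classical

/-- The Hamming weight of a binary string. -/
def hammingWt {m : ℕ} (x : Fin m → Fin 2) : ℕ :=
  (Finset.univ.filter fun i => x i = 1).card

lemma hammingWt_append {N n : ℕ} (h : N = n + (N - n)) (u : Fin n → Fin 2)
    (v : Fin (N - n) → Fin 2) :
    hammingWt (Fin.append u v ∘ Fin.cast h) = hammingWt u + hammingWt v := by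
  have key : ∀ {m : ℕ} (x : Fin m → Fin 2), hammingWt x = ∑ i, if x i = 1 then 1 else 0 :=
    fun x => Finset.card_filter _ _
  have hsum : (∑ i, if (Fin.append u v ∘ Fin.cast h) i = 1 then 1 else 0) =
      ∑ i, if Fin.append u v i = 1 then 1 else 0 :=
    Fintype.sum_equiv (finCongr h) _ _ (fun i => rfl)
  rw [key, key, key, hsum, Fin.sum_univ_add]
  simp

/-- The Hamming weight truncated at `k + 1`. -/
def cappedWt (k : ℕ) {m : ℕ} (u : Fin m → Fin 2) : Fin (k + 2) :=
  ⟨min (hammingWt u) (k + 1), by omega⟩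

/-- The Schmidt rank of the complement of the Dicke-`k` state across any cut `n`
is at most `k + 2`. -/
theorem rank_Psi_compl_hammingSet_le (N k n : ℕ) (hn : n ≤ N) :
    (Psi N n hn (hammingSet N k)ᶜ).rank ≤ k + 2 := by
  -- Row `j` of the right factor is the common row of all `u` with `min (w u) (k + 1) = j`;
  -- for `j = k + 1` it is the all-ones row.
  have hfac : Psi N n hn (hammingSet N k)ᶜ =
      (Matrix.of fun u (j : Fin (k + 2)) => if j = cappedWt k u then (1 : ℂ) else 0) *
      (Matrix.of fun (j : Fin (k + 2)) v => if (j : ℕ) + hammingWt v = k then (0 : ℂ) else 1) := by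
    ext u v
    have hmem : (Fin.append u v ∘ Fin.cast (by omega : N = n + (N - n))) ∈ (hammingSet N k)ᶜ ↔
        ¬ (hammingWt u + hammingWt v = k) := by
      rw [← hammingWt_append (by omega) u v]
      rfl
    have hcap : (cappedWt k u : ℕ) + hammingWt v = k ↔ hammingWt u + hammingWt v = k := by
      simp only [cappedWt]
      omega
    rw [Matrix.mul_apply, Finset.sum_eq_single (cappedWt k u)]
    · simp only [Psi, Matrix.of_apply, hmem, hcap, if_true, one_mul, ite_not]
    · intro j _ hj
      simp [hj]
    · simp
  rw [hfac]
  refine (Matrix.rank_mul_le_left _ _).trans ((Matrix.rank_le_card_width _).trans ?_)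
  simp
end

section
/- Let Σ be a finite alphabet, N ∈ ℕ, and ψ : Σ^N → ℂ a complex amplitude function on words of length N. Fix cuts a, b with 0 ≤ a ≤ b ≤ N, and let χ_a and χ_b be the ranks of the reshaped matrices of ψ across cuts a and b respectively. Then the matrix M with rows indexed by pairs (u, w) ∈ Σ^a × Σ^{N−b} and columns indexed by v ∈ Σ^{b−a}, defined by M((u,w), v) = ψ(u·v·w), has rank at most χ_a · χ_b. -/
/-!
Let `r = χ_a` and `s = χ_b`. Some `r` rows of the reshaping across `a`, indexed by words
`u_1, …, u_r`, span its row space, and some `s` columns of the reshaping across `b`, indexed by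
words `w_1, …, w_s`, span its column space (`exists_rows_spanning`, applied to the matrix and to a
transpose). Expanding the prefix `u` and then the suffix `w` gives
`ψ(u·v·w) = ∑ i j, α(u,i) β(w,j) ψ(u_i·v·w_j)`, so the matrix of the middle block factors through
a space of dimension `r * s` (`rank_tripartite_le_mul`). The remainder identifies the two
parenthesizations of `u·v·w` with words across the cuts `a` and `b`.
-/

/-- The reshaped matrix of an amplitude function `ψ` on words of length `N` across a cut
`c ≤ N`: the `(x, y)` entry is `ψ (x·y)`. -/
def reshape {Γ : Type*} (N c : ℕ) (hc : c ≤ N) (ψ : (Fin N → Γ) → ℂ) :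
    Matrix (Fin c → Γ) (Fin (N - c) → Γ) ℂ :=
  Matrix.of fun x y => ψ (Fin.append x y ∘ Fin.cast (by omega : N = c + (N - c)))

/-- The rows of a matrix of rank `r` are linear combinations of `r` rows among them. -/
lemma exists_rows_spanning {m n : Type*} [Finite m] [Fintype n] (A : Matrix m n ℂ) :
    ∃ (s : Fin A.rank → m) (α : m → Fin A.rank → ℂ),
      ∀ i j, A i j = ∑ k, α i k * A (s k) j := by
  obtain ⟨κ, t, ht, hspan, hli⟩ := exists_linearIndependent' ℂ A.row
  have : Finite κ := Finite.of_injective t ht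
  have := Fintype.ofFinite κ
  have hcard : Fintype.card κ = A.rank := by
    rw [Matrix.rank_eq_finrank_span_row, ← hspan, finrank_span_eq_card hli]
  let e : Fin A.rank ≃ κ := (Fintype.equivFinOfCardEq hcard).symm
  have hmem : ∀ i, ∃ c : κ → ℂ, ∑ k, c k • (A.row ∘ t) k = A.row i := fun i =>
    (Submodule.mem_span_range_iff_exists_fun ℂ).1
      (hspan ▸ Submodule.subset_span (Set.mem_range_self i))
  choose c hc using hmem
  refine ⟨t ∘ e, fun i k => c i (e k), fun i j => ?_⟩
  have h := congrFun (hc i) j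
  simp only [Finset.sum_apply, Pi.smul_apply, Function.comp_apply, Matrix.row_apply,
    smul_eq_mul] at h
  rw [← h]
  exact (e.sum_comp fun k => c i k * A (t k) j).symm

/-- The rank bound for a three-index tensor `f`, with `A` and `B` matrices that contain the
flattenings `u | (v, w)` and `(u, v) | w` of `f` through the index maps `g` and `h`. -/
lemma rank_tripartite_le_mul {U V W X Y : Type*} [Finite U] [Fintype V] [Fintype W]
    [Fintype X] [Fintype Y] (f : U → V → W → ℂ) (A : Matrix U X ℂ) (B : Matrix Y W ℂ)
    (g : V → W → X) (h : U → V → Y) (hA : ∀ u v w, f u v w = A u (g v w))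
    (hB : ∀ u v w, f u v w = B (h u v) w) :
    (Matrix.of fun (p : U × W) (v : V) => f p.1 v p.2).rank ≤ A.rank * B.rank := by
  obtain ⟨s, α, hα⟩ := exists_rows_spanning A
  obtain ⟨t, β, hβ⟩ := exists_rows_spanning B.transpose
  have hfac : (Matrix.of fun (p : U × W) (v : V) => f p.1 v p.2) =
      (Matrix.of fun (p : U × W) (k : Fin A.rank × Fin B.transpose.rank) =>
        α p.1 k.1 * β p.2 k.2) *
      (Matrix.of fun (k : Fin A.rank × Fin B.transpose.rank) (v : V) =>
        f (s k.1) v (t k.2)) := by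
    ext ⟨u, w⟩ v
    have h1 : f u v w = ∑ i, α u i * f (s i) v w := by
      simp only [hA]
      exact hα u (g v w)
    have h2 : ∀ i, f (s i) v w = ∑ j, β w j * f (s i) v (t j) := fun i => by
      simp only [hB]
      exact hβ w (h (s i) v)
    simp only [Matrix.mul_apply, Matrix.of_apply, Fintype.sum_prod_type]
    rw [h1]
    refine Finset.sum_congr rfl fun i _ => ?_
    rw [h2, Finset.mul_sum]
    exact Finset.sum_congr rfl fun j _ => by ring
  rw [hfac]
  refine (Matrix.rank_mul_le_left _ _).trans ((Matrix.rank_le_card_width _).trans ?_)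
  simp [Matrix.rank_transpose]

/-- The rank of the reshaping of `ψ` along the bipartition of the sites into the middle
block `{a+1, …, b}` versus its complement is at most `χ_a · χ_b`. -/
theorem rank_middle_block_le_mul {Γ : Type*} [Fintype Γ] (N a b : ℕ)
    (hab : a ≤ b) (hb : b ≤ N) (ψ : (Fin N → Γ) → ℂ) :
    (Matrix.of fun (p : (Fin a → Γ) × (Fin (N - b) → Γ)) (v : Fin (b - a) → Γ) =>
        ψ (Fin.append (Fin.append p.1 v) p.2 ∘
          Fin.cast (by omega : N = a + (b - a) + (N - b)))).rank ≤
      (reshape N a (hab.trans hb) ψ).rank * (reshape N b hb ψ).rank := by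
  refine rank_tripartite_le_mul
    (fun u v w => ψ (Fin.append (Fin.append u v) w ∘
      Fin.cast (by omega : N = a + (b - a) + (N - b)))) _ _
    (fun v w => Fin.append v w ∘ Fin.cast (by omega : N - a = (b - a) + (N - b)))
    (fun u v => Fin.append u v ∘ Fin.cast (by omega : b = a + (b - a)))
    (fun u v w => ?_) (fun u v w => ?_)
  · simp only [reshape, Matrix.of_apply]
    congr 1
    rw [Fin.append_assoc, Fin.append_cast_right _ _ _ (by omega)]
    rfl
  · simp only [reshape, Matrix.of_apply]
    congr 1
    rw [Fin.append_cast_left _ _ _ (by omega)]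
    rfl
end

section
/- Let Σ be a finite alphabet, N ∈ ℕ with N ≥ 1, and ψ : Σ^N → ℂ an amplitude function. Let χ be the maximum over all cuts c ∈ {0,…,N} of the rank of the reshaped matrix of ψ across cut c, and assume χ ≥ 1. Then there exist, for each site i ∈ Fin N and each letter s ∈ Σ, a complex matrix A_i^s of size χ×χ, together with vectors l, r ∈ ℂ^χ, such that for every word x = (x₁,…,x_N) ∈ Σ^N one has ψ(x) = lᵀ · (A_1^{x₁} · A_2^{x₂} · ⋯ · A_N^{x_N}) · r. (That is, ψ admits a matrix product state representation whose bond dimension equals its maximal Schmidt rank.) -/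
/-!
Extend `ψ` by zero to a function `Ψ` on all lists, and for a prefix `p` let `prefixRow ψ p` be the
function `q ↦ Ψ (p ++ q)`. The span `rowSpan ψ c` of the rows with `|p| = c` is the row space of the
reshaped matrix across the cut `c`, so its dimension is at most `χ` (`finrank_rowSpan_le`) and it is
spanned by a family `b c` of `χ` vectors. The left derivative `f ↦ (q ↦ f (s :: q))` sends the row of
`p` to the row of `p ++ [s]`, hence `rowSpan ψ c` into `rowSpan ψ (c + 1)` (`leftDeriv_mem_rowSpan`).
Writing the derivative of `b c i` in terms of `b (c + 1)` gives row `i` of the matrix `A c s`;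
the boundary vector `l` holds coefficients of the row of the empty prefix with respect to `b 0`, and
`r` holds the values of `b N` at the empty list. By induction on `k`, the row of the length-`k`
prefix of `x` has coefficients `lᵀ A_1^{x_1} ⋯ A_k^{x_k}` with respect to `b k`; evaluating the case
`k = N` at the empty list gives `ψ x`.
-/

open scoped Matrix

/-- The function `ψ` on words of length `N`, extended by zero to all lists. -/
noncomputable def listExtend {Γ : Type*} {N : ℕ} (ψ : (Fin N → Γ) → ℂ) (L : List Γ) : ℂ :=
  if h : L.length = N then ψ (fun i => L.get (i.cast h.symm)) else 0

/-- The row of a prefix `p`: the amplitude of `p ++ q` as a function of the suffix `q`. -/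
noncomputable def prefixRow {Γ : Type*} {N : ℕ} (ψ : (Fin N → Γ) → ℂ) (p : List Γ) :
    List Γ → ℂ :=
  fun q => listExtend ψ (p ++ q)

/-- The span of the rows of all prefixes of length `c`. -/
noncomputable def rowSpan {Γ : Type*} {N : ℕ} (ψ : (Fin N → Γ) → ℂ) (c : ℕ) :
    Submodule ℂ (List Γ → ℂ) :=
  Submodule.span ℂ (Set.range fun x : Fin c → Γ => prefixRow ψ (List.ofFn x))

/-- The left derivative of a function on lists with respect to the letter `s`. -/
def leftDeriv {Γ : Type*} (s : Γ) : (List Γ → ℂ) →ₗ[ℂ] (List Γ → ℂ) :=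
  LinearMap.funLeft ℂ ℂ (List.cons s)

/-- Extension by zero of functions on words of length `m` to all lists, as a linear map. -/
noncomputable def extendLin (Γ : Type*) (m : ℕ) : ((Fin m → Γ) → ℂ) →ₗ[ℂ] (List Γ → ℂ) where
  toFun g := listExtend g
  map_add' f g := by
    funext L
    by_cases h : L.length = m <;> simp [listExtend, h]
  map_smul' a g := by
    funext L
    by_cases h : L.length = m <;> simp [listExtend, h]

lemma listExtend_ofFn {Γ : Type*} {N : ℕ} (ψ : (Fin N → Γ) → ℂ) (x : Fin N → Γ) :
    listExtend ψ (List.ofFn x) = ψ x := by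
  have h : (List.ofFn x).length = N := List.length_ofFn
  rw [listExtend, dif_pos h]
  congr 1
  funext i
  simp

lemma leftDeriv_prefixRow {Γ : Type*} {N : ℕ} (ψ : (Fin N → Γ) → ℂ) (s : Γ) (p : List Γ) :
    leftDeriv s (prefixRow ψ p) = prefixRow ψ (p ++ [s]) := by
  funext q
  simp [leftDeriv, prefixRow, LinearMap.funLeft_apply]

lemma leftDeriv_mem_rowSpan {Γ : Type*} {N : ℕ} (ψ : (Fin N → Γ) → ℂ) (s : Γ) (c : ℕ)
    {f : List Γ → ℂ} (hf : f ∈ rowSpan ψ c) : leftDeriv s f ∈ rowSpan ψ (c + 1) := by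
  have hle : rowSpan ψ c ≤ (rowSpan ψ (c + 1)).comap (leftDeriv s) := by
    refine Submodule.span_le.2 ?_
    rintro _ ⟨x, rfl⟩
    change leftDeriv s (prefixRow ψ (List.ofFn x)) ∈ rowSpan ψ (c + 1)
    rw [leftDeriv_prefixRow]
    refine Submodule.subset_span ⟨Fin.snoc x s, ?_⟩
    dsimp only
    rw [List.ofFn_succ_last]
    simp only [Fin.snoc_castSucc, Fin.snoc_last]
  exact hle hf

lemma prefixRow_ofFn {Γ : Type*} {N : ℕ} (ψ : (Fin N → Γ) → ℂ) (c : ℕ) (hc : c ≤ N)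
    (x : Fin c → Γ) :
    prefixRow ψ (List.ofFn x) = extendLin Γ (N - c) ((reshape N c hc ψ).row x) := by
  funext q
  change listExtend ψ (List.ofFn x ++ q) = listExtend _ q
  by_cases hq : q.length = N - c
  · have h : (List.ofFn x ++ q).length = N := by simp; omega
    rw [listExtend, listExtend, dif_pos h, dif_pos hq]
    simp only [Matrix.row, reshape, Matrix.of_apply]
    congr 1
    funext i
    by_cases hi : (i : ℕ) < c
    · have : Fin.cast (by omega : N = c + (N - c)) i = Fin.castAdd (N - c) ⟨i, hi⟩ := rfl
      rw [Function.comp_apply, this, Fin.append_left]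
      simp [List.getElem_append, hi]
    · have : Fin.cast (by omega : N = c + (N - c)) i = Fin.natAdd c ⟨i - c, by omega⟩ := by
        ext; simp; omega
      rw [Function.comp_apply, this, Fin.append_right]
      simp [List.getElem_append, hi]
  · have h : ¬ (List.ofFn x ++ q).length = N := by simp; omega
    rw [listExtend, listExtend, dif_neg h, dif_neg hq]

lemma rowSpan_eq_map {Γ : Type*} {N : ℕ} (ψ : (Fin N → Γ) → ℂ) (c : ℕ) (hc : c ≤ N) :
    rowSpan ψ c = (Submodule.span ℂ (Set.range (reshape N c hc ψ).row)).map
      (extendLin Γ (N - c)) := by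
  rw [Submodule.map_span, ← Set.range_comp, rowSpan]
  congr 2
  funext x
  exact prefixRow_ofFn ψ c hc x

lemma finrank_rowSpan_le {Γ : Type*} [Fintype Γ] {N : ℕ} (ψ : (Fin N → Γ) → ℂ) (c : ℕ)
    (hc : c ≤ N) : Module.finrank ℂ (rowSpan ψ c) ≤ (reshape N c hc ψ).rank := by
  rw [rowSpan_eq_map ψ c hc, Matrix.rank_eq_finrank_span_row]
  exact Submodule.finrank_map_le _ _

/-- A subspace of dimension at most `n` is spanned by a family of exactly `n` vectors: a basis
padded with zeros. -/
lemma exists_span_range_eq {V : Type*} [AddCommGroup V] [Module ℂ V] (W : Submodule ℂ V)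
    [FiniteDimensional ℂ W] (n : ℕ) (h : Module.finrank ℂ W ≤ n) :
    ∃ b : Fin n → V, Submodule.span ℂ (Set.range b) = W := by
  let e := Module.finBasis ℂ W
  refine ⟨fun i => if hi : (i : ℕ) < Module.finrank ℂ W then (e ⟨i, hi⟩ : V) else 0, ?_⟩
  apply le_antisymm
  · refine Submodule.span_le.2 ?_
    rintro _ ⟨i, rfl⟩
    dsimp only
    split_ifs
    · exact (e _).2
    · exact W.zero_mem
  · have hW : W = Submodule.span ℂ (Set.range fun i => (e i : V)) := by
      have := congrArg (Submodule.map W.subtype) e.span_eq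
      rw [Submodule.map_span, ← Set.range_comp, Submodule.map_subtype_top] at this
      exact this.symm
    conv_lhs => rw [hW]
    refine Submodule.span_mono ?_
    rintro _ ⟨i, rfl⟩
    exact ⟨⟨i, by omega⟩, by simp⟩

/-- Every amplitude function `ψ` on words of length `N ≥ 1` admits a matrix product state
representation whose bond dimension `χ` equals its maximal Schmidt rank over all cuts. -/
theorem exists_mps_of_bond_dim_maximal_schmidt_rank {Γ : Type*} [Fintype Γ]
    (N : ℕ) (hN : 1 ≤ N) (ψ : (Fin N → Γ) → ℂ) (χ : ℕ)
    (hχ : χ = Finset.univ.sup fun c : Fin (N + 1) =>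
      (reshape N c (by omega : (c : ℕ) ≤ N) ψ).rank)
    (hχ1 : 1 ≤ χ) :
    ∃ (A : Fin N → Γ → Matrix (Fin χ) (Fin χ) ℂ) (l r : Fin χ → ℂ),
      ∀ x : Fin N → Γ,
        ψ x = l ⬝ᵥ ((List.ofFn fun i => A i (x i)).prod).mulVec r := by
  have hb : ∀ c, ∃ b : Fin χ → List Γ → ℂ,
      c ≤ N → Submodule.span ℂ (Set.range b) = rowSpan ψ c := by
    intro c
    by_cases hc : c ≤ N
    · have hfin : FiniteDimensional ℂ (rowSpan ψ c) :=
        FiniteDimensional.span_of_finite ℂ (Set.finite_range _)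
      have hle : Module.finrank ℂ (rowSpan ψ c) ≤ χ := by
        refine (finrank_rowSpan_le ψ c hc).trans ?_
        rw [hχ]
        exact Finset.le_sup (f := fun c : Fin (N + 1) =>
          (reshape N c (by omega : (c : ℕ) ≤ N) ψ).rank)
          (Finset.mem_univ (⟨c, by omega⟩ : Fin (N + 1)))
      obtain ⟨b, h⟩ := exists_span_range_eq (rowSpan ψ c) χ hle
      exact ⟨b, fun _ => h⟩
    · exact ⟨0, fun h => absurd h hc⟩
  choose b hb using hb
  have hA : ∀ (c : ℕ) (s : Γ) (i : Fin χ), ∃ a : Fin χ → ℂ,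
      c < N → ∑ j, a j • b (c + 1) j = leftDeriv s (b c i) := by
    intro c s i
    by_cases hc : c < N
    · have hmem : leftDeriv s (b c i) ∈ Submodule.span ℂ (Set.range (b (c + 1))) := by
        rw [hb (c + 1) hc]
        refine leftDeriv_mem_rowSpan ψ s c ?_
        rw [← hb c hc.le]
        exact Submodule.subset_span ⟨i, rfl⟩
      obtain ⟨a, ha⟩ := (Submodule.mem_span_range_iff_exists_fun ℂ).1 hmem
      exact ⟨a, fun _ => ha⟩
    · exact ⟨0, fun h => absurd h hc⟩
  choose A hA using hA
  have hl : prefixRow ψ [] ∈ Submodule.span ℂ (Set.range (b 0)) := by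
    rw [hb 0 (Nat.zero_le _)]
    exact Submodule.subset_span ⟨Fin.elim0, by simp⟩
  obtain ⟨l, hl⟩ := (Submodule.mem_span_range_iff_exists_fun ℂ).1 hl
  refine ⟨fun i s => Matrix.of (A i s), l, fun j => b N j [], fun x => ?_⟩
  have key : ∀ (k : ℕ) (hk : k ≤ N),
      prefixRow ψ (List.ofFn fun i : Fin k => x (i.castLE hk)) =
        ∑ j, (l ᵥ* (List.ofFn fun i : Fin k =>
          (Matrix.of (A i (x (i.castLE hk))) : Matrix (Fin χ) (Fin χ) ℂ)).prod) j • b k j := by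
    intro k
    induction k with
    | zero => intro _; simp [hl]
    | succ k ih =>
      intro hk
      rw [List.ofFn_succ_last, List.ofFn_succ_last, ← leftDeriv_prefixRow, List.prod_append,
        List.prod_singleton, ← Matrix.vecMul_vecMul]
      have ih' := ih (by omega)
      simp only [Fin.castLE_castSucc, Fin.val_castSucc] at ih' ⊢
      rw [ih', map_sum]
      simp only [map_smul, ← hA k _ _ hk, Fin.val_last]
      generalize l ᵥ* _ = v
      simp only [Matrix.vecMul, dotProduct, Finset.sum_smul, Finset.smul_sum, smul_smul,
        Matrix.of_apply]
      rw [Finset.sum_comm]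
  have h := congrFun (key N le_rfl) []
  simp only [prefixRow, List.append_nil, Fin.castLE_rfl, id] at h
  rw [listExtend_ofFn] at h
  rw [h, Matrix.dotProduct_mulVec]
  simp [dotProduct]
end
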